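/- For every Borel probability measure μ on ℝ^d, the porosity of μ satisfies 0 ≤ por(μ) ≤ 1/2. -/

import Mathlib

open MeasureTheory Filter Metric Set
open scoped Classical

/-- `por(μ,x,r,ε)`: the supremum of `α ≥ 0` such that some ball `B(y,αr) ⊆ B(x,r)` has
`μ(B(y,αr)) ≤ ε·μ(B(x,r))` (an "ε-hole" of relative size `α`). -/
noncomputable def porMeas {X : Type*} [MetricSpace X] [MeasurableSpace X]
    (μ : Measure X) (x : X) (r ε : ℝ) : ℝ :=
  sSup {α : ℝ | 0 ≤ α ∧ ∃ y, Metric.ball y (α * r) ⊆ Metric.ball x r ∧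
    μ (Metric.ball y (α * r)) ≤ ENNReal.ofReal ε * μ (Metric.ball x r)}

/-- `por(μ,x,ε) = liminf_{r→0} por(μ,x,r,ε)`. -/
noncomputable def porMeasPt {X : Type*} [MetricSpace X] [MeasurableSpace X]
    (μ : Measure X) (x : X) (ε : ℝ) : ℝ :=
  Filter.liminf (fun r : ℝ => porMeas μ x r ε) (nhdsWithin 0 (Set.Ioi 0))

/-- `por(μ,ε)`: the `μ`-essential infimum of `x ↦ por(μ,x,ε)`. -/
noncomputable def porMeasEps {X : Type*} [MetricSpace X] [MeasurableSpace X]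
    (μ : Measure X) (ε : ℝ) : ℝ :=
  essInf (fun x => porMeasPt μ x ε) μ

/-- `por(μ) = lim_{ε→0⁺} por(μ,ε)`; since `ε ↦ por(μ,ε)` is nondecreasing, this limit is
the infimum of `por(μ,ε)` over `ε > 0`. -/
noncomputable def porMeasure {X : Type*} [MetricSpace X] [MeasurableSpace X]
    (μ : Measure X) : ℝ :=
  sInf ((fun ε => porMeasEps μ ε) '' Set.Ioi 0)

/-!
If `B(y, βr) ⊆ B(x, r)` with `β > 1/2`, then `dist x y ≤ (1 - β) r`, so the hole `B(y, βr)`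
contains `B(x, (2β - 1) r)`. Porosity larger than `α > 1/2` thus forces
`μ (B(x, cr)) ≤ ε μ (B(x, r))` with `c = 2α - 1` at all small scales, and by iteration
`μ (B(x, c ^ n s)) ≲ ε ^ n`. By differentiation of measures, Haar measure is at most a constant
times `μ` on small balls around `μ`-almost every point, so `c ^ (n * d) ≲ ε ^ n`, which is
impossible for large `n` as soon as `ε < c ^ d`.
-/

section Limits

theorem real_liminf_nonneg {ι : Type*} {l : Filter ι} {f : ι → ℝ} (hf : ∀ᶠ i in l, 0 ≤ f i) :
    0 ≤ liminf f l := by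
  rw [liminf_eq]
  -- If the eventual lower bounds of `f` are unbounded above, their supremum is `0` by convention.
  exact Real.sSup_nonneg' ⟨0, hf, le_rfl⟩

theorem ennreal_eq_zero_of_forall_pow_mul_le {a b C K : ENNReal} (hab : a < b) (hb : b ≠ ⊤)
    (hC : C ≠ ⊤) (h : ∀ n : ℕ, b ^ n * K ≤ a ^ n * C) : K = 0 := by
  have hb₀ : b ≠ 0 := (zero_le.trans_lt hab).ne'
  have h_le (n : ℕ) : K ≤ (a / b) ^ n * C := by
    rw [ENNReal.div_eq_inv_mul, mul_pow, ← ENNReal.inv_pow, mul_assoc]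
    exact (ENNReal.mul_le_iff_le_inv (pow_ne_zero n hb₀) (ENNReal.pow_ne_top hb)).1 (h n)
  have h_ratio : a / b < 1 := (ENNReal.div_lt_iff (.inl hb₀) (.inl hb)).2 (by rwa [one_mul])
  have h_tendsto : Tendsto (fun n : ℕ => (a / b) ^ n * C) atTop (nhds 0) := by
    simpa only [zero_mul] using ENNReal.Tendsto.mul_const
      (ENNReal.tendsto_pow_atTop_nhds_zero_of_lt_one h_ratio) (.inr hC)
  exact nonpos_iff_eq_zero.1 (ge_of_tendsto' h_tendsto h_le)

end Limits

section Porosity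

variable {X : Type*} [MetricSpace X] [MeasurableSpace X] (μ : Measure X)

theorem porMeas_nonneg (x : X) (r ε : ℝ) : 0 ≤ porMeas μ x r ε :=
  Real.sSup_nonneg fun _ hα => hα.1

theorem porMeasPt_nonneg (x : X) (ε : ℝ) : 0 ≤ porMeasPt μ x ε :=
  real_liminf_nonneg (.of_forall fun r => porMeas_nonneg μ x r ε)

theorem porMeasEps_nonneg (ε : ℝ) : 0 ≤ porMeasEps μ ε :=
  real_liminf_nonneg (.of_forall fun x => porMeasPt_nonneg μ x ε)

theorem porMeasure_nonneg : 0 ≤ porMeasure μ :=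
  Real.sInf_nonneg (forall_mem_image.2 fun ε _ => porMeasEps_nonneg μ ε)

variable {μ}

theorem porMeasPt_le_of_frequently_le {x : X} {ε α : ℝ}
    (h : ∃ᶠ r in nhdsWithin 0 (Ioi 0), porMeas μ x r ε ≤ α) : porMeasPt μ x ε ≤ α :=
  liminf_le_of_frequently_le h
    (isBoundedUnder_of_eventually_ge (.of_forall fun r => porMeas_nonneg μ x r ε))

theorem porMeasEps_le_of_ae_le [NeZero μ] {ε α : ℝ} (h : ∀ᵐ x ∂μ, porMeasPt μ x ε ≤ α) :
    porMeasEps μ ε ≤ α :=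
  liminf_le_of_frequently_le h.frequently
    (isBoundedUnder_of_eventually_ge (.of_forall fun x => porMeasPt_nonneg μ x ε))

theorem porMeasure_le_porMeasEps {ε : ℝ} (hε : 0 < ε) : porMeasure μ ≤ porMeasEps μ ε :=
  csInf_le ⟨0, forall_mem_image.2 fun ε _ => porMeasEps_nonneg μ ε⟩ (mem_image_of_mem _ hε)

end Porosity

section Holes

variable {E : Type*} [NormedAddCommGroup E] [NormedSpace ℝ E] [Nontrivial E]

theorem exists_sameRay_norm_eq (u : E) {R : ℝ} (hR : 0 ≤ R) :
    ∃ v : E, SameRay ℝ u v ∧ ‖v‖ = R := by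
  rcases eq_or_ne u 0 with rfl | hu
  · obtain ⟨v, hv⟩ := exists_norm_eq E hR
    exact ⟨v, .zero_left v, hv⟩
  · refine ⟨(R / ‖u‖) • u, .sameRay_nonneg_smul_right u (by positivity), ?_⟩
    rw [norm_smul, norm_div, norm_norm, Real.norm_of_nonneg hR,
      div_mul_cancel₀ R (norm_ne_zero_iff.2 hu)]

theorem dist_add_le_of_ball_subset_ball {x y : E} {R r : ℝ} (hR : 0 < R)
    (h : ball y R ⊆ ball x r) : dist y x + R ≤ r := by
  obtain ⟨v, hray, hv⟩ := exists_sameRay_norm_eq (y - x) hR.le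
  have h_closedBall : closedBall y R ⊆ closedBall x r := by
    rw [← closure_ball y hR.ne']
    exact (closure_mono h).trans closure_ball_subset_closedBall
  calc dist y x + R = ‖y - x + v‖ := by rw [hray.norm_add, hv, dist_eq_norm]
    _ = dist (y + v) x := by rw [dist_eq_norm, add_sub_right_comm]
    _ ≤ r := h_closedBall (by simp [hv])

theorem measure_ball_le_of_lt_porMeas [MeasurableSpace E] {μ : Measure E} {x : E} {r ε α : ℝ}
    (hr : 0 < r) (hα : 0 ≤ α) (h : α < porMeas μ x r ε) :
    μ (ball x ((2 * α - 1) * r)) ≤ ENNReal.ofReal ε * μ (ball x r) := by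
  obtain ⟨β, ⟨-, y, h_subset, h_hole⟩, hαβ⟩ :=
    exists_lt_of_lt_csSup (by exact ⟨0, le_rfl, x, by simp, by simp⟩) h
  have h_dist : dist y x + β * r ≤ r :=
    dist_add_le_of_ball_subset_ball (mul_pos (hα.trans_lt hαβ) hr) h_subset
  refine (measure_mono (ball_subset_ball' ?_)).trans h_hole
  rw [dist_comm]
  nlinarith

end Holes

theorem measure_ball_pow_mul_le {X : Type*} [PseudoMetricSpace X] [MeasurableSpace X]
    {μ : Measure X} {x : X} {a : ENNReal} {c s : ℝ} (hc₀ : 0 < c) (hc₁ : c ≤ 1) (hs : 0 < s)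
    (h : ∀ r ∈ Ioc 0 s, μ (ball x (c * r)) ≤ a * μ (ball x r)) (n : ℕ) :
    μ (ball x (c ^ n * s)) ≤ a ^ n * μ (ball x s) := by
  induction n with
  | zero => simp
  | succ n ih =>
    have h_mem : c ^ n * s ∈ Ioc 0 s :=
      ⟨by positivity, mul_le_of_le_one_left hs.le (pow_le_one₀ hc₀.le hc₁)⟩
    calc μ (ball x (c ^ (n + 1) * s)) = μ (ball x (c * (c ^ n * s))) := by rw [pow_succ', mul_assoc]
      _ ≤ a * μ (ball x (c ^ n * s)) := h _ h_mem
      _ ≤ a * (a ^ n * μ (ball x s)) := by gcongr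
      _ = a ^ (n + 1) * μ (ball x s) := by rw [pow_succ', mul_assoc]

section Density

theorem ae_exists_eventually_measure_closedBall_le {X : Type*} [MetricSpace X]
    [SecondCountableTopology X] [HasBesicovitchCovering X] [MeasurableSpace X] [BorelSpace X]
    (ν μ : Measure X) [IsLocallyFiniteMeasure ν] [IsLocallyFiniteMeasure μ] :
    ∀ᵐ x ∂μ, ∃ M : NNReal, ∀ᶠ r in nhdsWithin 0 (Ioi 0),
      ν (closedBall x r) ≤ M * μ (closedBall x r) := by
  filter_upwards [Besicovitch.ae_tendsto_rnDeriv ν μ, ν.rnDeriv_lt_top μ] with x h_tendsto h_top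
  obtain ⟨M, hM, -⟩ := ENNReal.lt_iff_exists_nnreal_btwn.1 h_top
  refine ⟨M, (h_tendsto.eventually_lt_const hM).mono fun r hr => ?_⟩
  exact (ENNReal.div_le_iff_le_mul (.inr ENNReal.coe_ne_top) (.inr hM.ne_bot)).1 hr.le

variable {E : Type*} [NormedAddCommGroup E] [NormedSpace ℝ E] [FiniteDimensional ℝ E]
  [MeasurableSpace E] [BorelSpace E]

open Module (finrank)

theorem addHaar_closedBall_pow_mul (ν : Measure E) [ν.IsAddHaarMeasure] (x : E) {c : ℝ}
    (hc : 0 < c) (t : ℝ) (n : ℕ) :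
    ν (closedBall x (c ^ n * t)) =
      ENNReal.ofReal (c ^ finrank ℝ E) ^ n * ν (closedBall 0 t) := by
  rw [Measure.addHaar_closedBall_mul_of_pos ν x (pow_pos hc n), pow_right_comm,
    ENNReal.ofReal_pow (by positivity)]

theorem ae_frequently_mul_measure_ball_lt (μ : Measure E) [IsLocallyFiniteMeasure μ]
    {a : ENNReal} {c : ℝ} (hc₀ : 0 < c) (hc₁ : c < 1)
    (ha : a < ENNReal.ofReal (c ^ finrank ℝ E)) :
    ∀ᵐ x ∂μ, ∃ᶠ r in nhdsWithin 0 (Ioi 0), a * μ (ball x r) < μ (ball x (c * r)) := by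
  let ν : Measure E := Measure.addHaar
  filter_upwards [ae_exists_eventually_measure_closedBall_le ν μ] with x ⟨M, hM⟩ h_decay
  simp only [not_lt] at h_decay
  obtain ⟨s, hs : 0 < s, h_small⟩ := mem_nhdsGT_iff_exists_Ioc_subset.1 (h_decay.and hM)
  have h_pow (n : ℕ) : ENNReal.ofReal (c ^ finrank ℝ E) ^ n * ν (closedBall 0 (c * s)) ≤
      a ^ n * (M * μ (ball x s)) := by
    have h_lt : c ^ n * (c * s) < c ^ n * s := by gcongr; exact mul_lt_of_lt_one_left hs hc₁
    have h_le : c ^ n * (c * s) ≤ s :=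
      h_lt.le.trans (mul_le_of_le_one_left hs.le (pow_le_one₀ hc₀.le hc₁.le))
    calc ENNReal.ofReal (c ^ finrank ℝ E) ^ n * ν (closedBall 0 (c * s))
        = ν (closedBall x (c ^ n * (c * s))) := (addHaar_closedBall_pow_mul ν x hc₀ _ n).symm
      _ ≤ M * μ (closedBall x (c ^ n * (c * s))) := (h_small ⟨by positivity, h_le⟩).2
      _ ≤ M * μ (ball x (c ^ n * s)) := by gcongr; exact closedBall_subset_ball h_lt
      _ ≤ M * (a ^ n * μ (ball x s)) := by
        gcongr
        exact measure_ball_pow_mul_le hc₀ hc₁.le hs (fun r hr => (h_small hr).1) n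
      _ = a ^ n * (M * μ (ball x s)) := mul_left_comm _ _ _
  have h_zero : ν (closedBall 0 (c * s)) = 0 :=
    ennreal_eq_zero_of_forall_pow_mul_le ha ENNReal.ofReal_ne_top
      (ENNReal.mul_ne_top ENNReal.coe_ne_top measure_ball_lt_top.ne) h_pow
  exact (measure_closedBall_pos ν 0 (mul_pos hc₀ hs)).ne' h_zero

variable [Nontrivial E]

theorem porMeasEps_le_of_lt_pow (μ : Measure E) [IsLocallyFiniteMeasure μ] [NeZero μ] {ε α : ℝ}
    (hα : 1 / 2 < α) (hα₁ : α < 1) (hε : ε < (2 * α - 1) ^ finrank ℝ E) :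
    porMeasEps μ ε ≤ α := by
  have hc : 0 < 2 * α - 1 := by linarith
  have h_lt : ENNReal.ofReal ε < ENNReal.ofReal ((2 * α - 1) ^ finrank ℝ E) :=
    (ENNReal.ofReal_lt_ofReal_iff (by positivity)).2 hε
  refine porMeasEps_le_of_ae_le ?_
  filter_upwards [ae_frequently_mul_measure_ball_lt μ hc (by linarith) h_lt] with x hx
  refine porMeasPt_le_of_frequently_le ((hx.and_eventually self_mem_nhdsWithin).mono ?_)
  rintro r ⟨h_ball, hr⟩
  contrapose! h_ball
  exact measure_ball_le_of_lt_porMeas hr (by linarith) h_ball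

theorem porMeasure_le_half (μ : Measure E) [IsLocallyFiniteMeasure μ] [NeZero μ] :
    porMeasure μ ≤ 1 / 2 := by
  by_contra! h
  obtain ⟨α, hα, hα_lt⟩ := exists_between (lt_min h one_half_lt_one)
  obtain ⟨hα_por, hα₁⟩ := lt_min_iff.1 hα_lt
  have hc : 0 < 2 * α - 1 := by linarith
  obtain ⟨ε, hε₀, hε⟩ := exists_between (pow_pos hc (finrank ℝ E))
  exact ((porMeasure_le_porMeasEps hε₀).trans (porMeasEps_le_of_lt_pow μ hα hα₁ hε)).not_gt hα_por

theorem stmt12_general (μ : Measure E) [IsLocallyFiniteMeasure μ] [NeZero μ] :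
    0 ≤ porMeasure μ ∧ porMeasure μ ≤ 1 / 2 :=
  ⟨porMeasure_nonneg μ, porMeasure_le_half μ⟩

end Density

/-- For every Borel probability measure `μ` on `ℝ^d`,
`0 ≤ por(μ) ≤ 1/2`. -/
theorem stmt12 (d : ℕ) (hd : 0 < d) (μ : Measure (EuclideanSpace ℝ (Fin d)))
    [IsProbabilityMeasure μ] :
    0 ≤ porMeasure μ ∧ porMeasure μ ≤ 1 / 2 := by
  have : Nonempty (Fin d) := Fin.pos_iff_nonempty.1 hd
  exact stmt12_general μ
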